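/- Let M be a matroid of rank r on finite ground set E. Then Z^⊤_{M+e}(s) = (1/(s+1)) · ( Z^⊤_M(s) − s/((|E|+1)s + r) · Y_M(s) ), where M + e is the free extension of M. -/

import Mathlib

open scoped Classical
open Polynomial

/-- The unsigned Stirling number of the first kind `c(n,k)`: the number of
permutations of an `n`-element set with exactly `k` disjoint cycles
(fixed points count as cycles). -/
noncomputable def stirlingFirst (n k : ℕ) : ℕ :=
  (Finset.univ.filter fun σ : Equiv.Perm (Fin n) =>
    Multiset.card σ.cycleType + (n - σ.support.card) = k).card

/-- The Stirling number of the second kind `S(n,k)`: the number of partitions of an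
`n`-element set into exactly `k` nonempty parts. -/
noncomputable def stirlingSecond (n k : ℕ) : ℕ :=
  (Finset.univ.filter fun P : Finset (Finset (Fin n)) =>
    P.card = k ∧ ∅ ∉ P ∧ (P : Set (Finset (Fin n))).PairwiseDisjoint id ∧
      P.sup id = Finset.univ).card

/-- A matroid on a finite ground set `E`, presented by its rank function. -/
structure FinMatroid (α : Type*) [DecidableEq α] where
  E : Finset α
  rk : Finset α → ℕ
  rk_empty : rk ∅ = 0
  rk_le_card : ∀ S : Finset α, rk S ≤ S.card
  rk_mono : ∀ ⦃S T : Finset α⦄, S ⊆ T → rk S ≤ rk T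
  rk_submod : ∀ S T : Finset α, rk (S ∪ T) + rk (S ∩ T) ≤ rk S + rk T

namespace FinMatroid

variable {α : Type*} [DecidableEq α]

/-- A flat of a matroid: a subset of the ground set such that adding any new element
of the ground set increases the rank. -/
def IsFlat (M : FinMatroid α) (F : Finset α) : Prop :=
  F ⊆ M.E ∧ ∀ x ∈ M.E, x ∉ F → M.rk F < M.rk (insert x F)

/-- The lattice of flats `L(M)`, as a finset. -/
noncomputable def flats (M : FinMatroid α) : Finset (Finset α) :=
  M.E.powerset.filter fun F => M.IsFlat F

/-- The proper flats, i.e. flats different from the ground set. -/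
noncomputable def properFlats (M : FinMatroid α) : Finset (Finset α) :=
  M.flats.filter fun F => F ≠ M.E

/-- A matroid is loopless if every singleton of the ground set has rank one. -/
def Loopless (M : FinMatroid α) : Prop := ∀ x ∈ M.E, M.rk {x} = 1

/-- The restriction `M|F` of a matroid to a subset of its ground set. -/
def restrict (M : FinMatroid α) (F : Finset α) : FinMatroid α :=
  ⟨F, M.rk, M.rk_empty, M.rk_le_card, M.rk_mono, M.rk_submod⟩

/-- The characteristic polynomial attached to a ground set and a rank function:
`χ(q) = ∑_{S ⊆ E} (-1)^{|S|} q^{rk E - rk S}`. -/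
noncomputable def charPolyAux (E : Finset α) (rk : Finset α → ℕ) : Polynomial ℚ :=
  ∑ S ∈ E.powerset, (-1 : Polynomial ℚ) ^ S.card * X ^ (rk E - rk S)

/-- The characteristic polynomial `χ_M(q)` of a matroid. -/
noncomputable def charPoly (M : FinMatroid α) : Polynomial ℚ := charPolyAux M.E M.rk

/-- The characteristic polynomial `χ_{M/F}(q)` of the contraction of `M` at `F`. -/
noncomputable def contractCharPoly (M : FinMatroid α) (F : Finset α) : Polynomial ℚ :=
  charPolyAux (M.E \ F) fun S => M.rk (S ∪ F) - M.rk F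

/-- The reduced characteristic polynomial `χ̄(q) = χ(q)/(q-1)`. -/
noncomputable def reducedCharPoly (p : Polynomial ℚ) : Polynomial ℚ := p /ₘ (X - C 1)

/-- The value `χ̄_{M/F}(1)` of the reduced characteristic polynomial of `M/F` at `q = 1`. -/
noncomputable def redCharContractOne (M : FinMatroid α) (F : Finset α) : ℚ :=
  (reducedCharPoly (M.contractCharPoly F)).eval 1

/-- The truncation `tr(M)`, with rank function `S ↦ min (rk S) (rk M - 1)`. -/
def truncation (M : FinMatroid α) : FinMatroid α where
  E := M.E
  rk S := min (M.rk S) (M.rk M.E - 1)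
  rk_empty := by simp [M.rk_empty]
  rk_le_card S := le_trans (min_le_left _ _) (M.rk_le_card S)
  rk_mono S T h := min_le_min (M.rk_mono h) le_rfl
  rk_submod S T := by
    have h1 := M.rk_submod S T
    have h2 : M.rk S ≤ M.rk (S ∪ T) := M.rk_mono Finset.subset_union_left
    have h3 : M.rk T ≤ M.rk (S ∪ T) := M.rk_mono Finset.subset_union_right
    have h4 : M.rk (S ∩ T) ≤ M.rk S := M.rk_mono Finset.inter_subset_left
    simp only [Nat.min_def]
    split_ifs <;> omega

/-- The direct sum `M₁ ⊕ M₂` of two matroids on disjoint ground sets. -/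
def directSum (M₁ M₂ : FinMatroid α) (h : Disjoint M₁.E M₂.E) : FinMatroid α where
  E := M₁.E ∪ M₂.E
  rk S := M₁.rk (S ∩ M₁.E) + M₂.rk (S ∩ M₂.E)
  rk_empty := by simp [M₁.rk_empty, M₂.rk_empty]
  rk_le_card S := by
    have hd : Disjoint (S ∩ M₁.E) (S ∩ M₂.E) :=
      h.mono Finset.inter_subset_right Finset.inter_subset_right
    calc M₁.rk (S ∩ M₁.E) + M₂.rk (S ∩ M₂.E)
        ≤ (S ∩ M₁.E).card + (S ∩ M₂.E).card :=
          add_le_add (M₁.rk_le_card _) (M₂.rk_le_card _)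
      _ = ((S ∩ M₁.E) ∪ (S ∩ M₂.E)).card := (Finset.card_union_of_disjoint hd).symm
      _ ≤ S.card := Finset.card_le_card
          (Finset.union_subset Finset.inter_subset_left Finset.inter_subset_left)
  rk_mono S T hST :=
    add_le_add (M₁.rk_mono (Finset.inter_subset_inter hST subset_rfl))
      (M₂.rk_mono (Finset.inter_subset_inter hST subset_rfl))
  rk_submod S T := by
    have e1 : ∀ E' : Finset α, (S ∪ T) ∩ E' = (S ∩ E') ∪ (T ∩ E') := by
      intro E'; ext x; simp only [Finset.mem_union, Finset.mem_inter]; tauto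
    have e2 : ∀ E' : Finset α, (S ∩ T) ∩ E' = (S ∩ E') ∩ (T ∩ E') := by
      intro E'; ext x; simp only [Finset.mem_inter]; tauto
    simp only [e1, e2]
    have h1 := M₁.rk_submod (S ∩ M₁.E) (T ∩ M₁.E)
    have h2 := M₂.rk_submod (S ∩ M₂.E) (T ∩ M₂.E)
    omega

/-- The free matroid `U_{n,n}` on a ground set `E` with `|E| = n`. -/
def freeM (E : Finset α) : FinMatroid α where
  E := E
  rk S := (S ∩ E).card
  rk_empty := by simp
  rk_le_card S := Finset.card_le_card Finset.inter_subset_left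
  rk_mono S T h := Finset.card_le_card (Finset.inter_subset_inter h subset_rfl)
  rk_submod S T := by
    have e1 : (S ∪ T) ∩ E = (S ∩ E) ∪ (T ∩ E) := by
      ext x; simp only [Finset.mem_union, Finset.mem_inter]; tauto
    have e2 : (S ∩ T) ∩ E = (S ∩ E) ∩ (T ∩ E) := by
      ext x; simp only [Finset.mem_inter]; tauto
    simp only [e1, e2]
    exact (Finset.card_union_add_card_inter _ _).le

/-- The uniform matroid `U_{r,n}` on a ground set `E` with `|E| = n`. -/
def uniformM (E : Finset α) (r : ℕ) : FinMatroid α where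
  E := E
  rk S := min (S ∩ E).card r
  rk_empty := by simp
  rk_le_card S := le_trans (min_le_left _ _) (Finset.card_le_card Finset.inter_subset_left)
  rk_mono S T h := min_le_min (Finset.card_le_card (Finset.inter_subset_inter h subset_rfl)) le_rfl
  rk_submod S T := by
    have e1 : (S ∪ T) ∩ E = (S ∩ E) ∪ (T ∩ E) := by
      ext x; simp only [Finset.mem_union, Finset.mem_inter]; tauto
    have e2 : (S ∩ T) ∩ E = (S ∩ E) ∩ (T ∩ E) := by
      ext x; simp only [Finset.mem_inter]; tauto
    have h3 := Finset.card_union_add_card_inter (S ∩ E) (T ∩ E)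
    have h4 : (S ∩ E).card ≤ ((S ∩ E) ∪ (T ∩ E)).card :=
      Finset.card_le_card Finset.subset_union_left
    have h5 : (T ∩ E).card ≤ ((S ∩ E) ∪ (T ∩ E)).card :=
      Finset.card_le_card Finset.subset_union_right
    simp only [e1, e2, Nat.min_def]
    split_ifs <;> omega

/-- The closure `cl_M(S)` of a set in a matroid: all ground set elements whose
addition does not increase the rank. -/
def cl (M : FinMatroid α) (S : Finset α) : Finset α :=
  M.E.filter fun x => M.rk (insert x S) = M.rk S

/-- The rank function of the free extension `M + e`. -/
def freeExtRk (M : FinMatroid α) (e : α) (S : Finset α) : ℕ :=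
  if e ∈ S then
    (if M.cl (S.erase e) = M.E then M.rk (S.erase e) else M.rk (S.erase e) + 1)
  else M.rk S

/-- The free extension `M + e`, realized as the truncation of `M ⊕ U_{1,1}`. -/
def freeExtension (M : FinMatroid α) (e : α) (he : e ∉ M.E) : FinMatroid α :=
  truncation (M.directSum (freeM {e}) (Finset.disjoint_singleton_right.mpr he))

/-- Predicate expressing that `Z` is the (combinatorial) topological zeta function:
`Z` of the trivial matroid is `1` and `Z` satisfies the defining recurrence
`Z_M(s) = (1/(|E|s + rk M)) ∑_{F proper flat} χ̄_{M/F}(1) ⬝ Z_{M|F}(s)`. -/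
def IsTopZeta (Z : FinMatroid α → RatFunc ℚ) : Prop :=
  (∀ M : FinMatroid α, M.E = ∅ → Z M = 1) ∧
  (∀ M : FinMatroid α, M.E.Nonempty →
    Z M = (∑ F ∈ M.properFlats,
        RatFunc.C (M.redCharContractOne F) * Z (M.restrict F)) /
      ((M.E.card : RatFunc ℚ) * RatFunc.X + (M.rk M.E : RatFunc ℚ)))

/-- Predicate expressing that `μ M F` is the Möbius function value `μ(F, E)` in the
lattice of flats of `M`: for every flat `F`, `∑_{G flat, F ⊆ G} μ(G,E) = δ_{F,E}`. -/
def IsFlatMobius (μ : FinMatroid α → Finset α → ℤ) : Prop :=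
  ∀ (M : FinMatroid α) (F : Finset α), M.IsFlat F →
    (∑ G ∈ M.flats.filter fun G => F ⊆ G, μ M G) = if F = M.E then 1 else 0

/-- Predicate expressing that `Y` is the Möbius inversion of `Z`:
`Y_M(s) = ∑_{F ∈ L(M)} μ(F,E) Z_{M|F}(s)`. -/
def IsMobiusInv (μ : FinMatroid α → Finset α → ℤ)
    (Z Y : FinMatroid α → RatFunc ℚ) : Prop :=
  ∀ M : FinMatroid α, Y M = ∑ F ∈ M.flats, (μ M F : RatFunc ℚ) * Z (M.restrict F)

/-- Predicate expressing that `Z` is the topological zeta function, viewed as an actual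
function `ℝ → ℝ` (away from poles): base case `1` for the trivial matroid, and the
defining recurrence pointwise. -/
def IsTopZetaFun (Z : FinMatroid α → ℝ → ℝ) : Prop :=
  (∀ M : FinMatroid α, M.E = ∅ → Z M = fun _ => 1) ∧
  (∀ M : FinMatroid α, M.E.Nonempty → ∀ s : ℝ,
    Z M s = (∑ F ∈ M.properFlats, (M.redCharContractOne F : ℝ) * Z (M.restrict F) s) /
      ((M.E.card : ℝ) * s + (M.rk M.E : ℝ)))

end FinMatroid

/-!
`M + e` is the truncation of `M ⊕ U_{1,1}`. Both `χ̄_{M/F}(1)` and `μ(F, E)` are alternating sums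
over the subsets `S` of `E \ F`: of the corank of `S ∪ F` in the first case, of the indicator that
`S ∪ F` spans in the second (Rota). On direct sums corank is additive and the indicator
multiplicative, which gives multiplicativity of `Z` by induction and hence that of `Y`. Truncation
lowers the corank by one except on spanning sets, so it changes `χ̄_{M/F}(1)` by `μ(F, E)` for
proper flats, and the recurrence for the truncation acquires the extra term `Y_M`.
-/

open scoped FinsetFamily

lemma sum_sups_of_disjoint {α β : Type*} [DecidableEq α] [AddCommMonoid β] {A B : Finset α}
    (h : Disjoint A B) {P Q : Finset (Finset α)} (hP : P ⊆ A.powerset) (hQ : Q ⊆ B.powerset)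
    (f : Finset α → β) : ∑ U ∈ P ⊻ Q, f U = ∑ S ∈ P, ∑ T ∈ Q, f (S ∪ T) := by
  have hinter : ∀ S ∈ P, ∀ T ∈ Q, (S ∪ T) ∩ A = S ∧ (S ∪ T) ∩ B = T := by
    intro S hS T hT
    have hSA := Finset.mem_powerset.1 (hP hS)
    have hTB := Finset.mem_powerset.1 (hQ hT)
    have hSB : S ∩ B = ∅ := Finset.disjoint_iff_inter_eq_empty.1 (h.mono_left hSA)
    have hTA : T ∩ A = ∅ := Finset.disjoint_iff_inter_eq_empty.1 (h.symm.mono_left hTB)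
    simp only [Finset.union_inter_distrib_right, Finset.inter_eq_left.2 hSA,
      Finset.inter_eq_left.2 hTB, hSB, hTA, Finset.union_empty, Finset.empty_union, and_self]
  have hinj : Set.InjOn (Function.uncurry (· ⊔ · : Finset α → Finset α → Finset α))
      (P ×ˢ Q : Finset (Finset α × Finset α)) := by
    rintro ⟨S, T⟩ hST ⟨S', T'⟩ hST' (heq : S ∪ T = S' ∪ T')
    obtain ⟨hS, hT⟩ := Finset.mem_product.1 hST
    obtain ⟨hS', hT'⟩ := Finset.mem_product.1 hST'
    obtain ⟨hSA, hTB⟩ := hinter S hS T hT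
    rw [heq, (hinter S' hS' T' hT').1] at hSA
    rw [heq, (hinter S' hS' T' hT').2] at hTB
    rw [hSA, hTB]
  rw [← Finset.image_sup_product, Finset.sum_image hinj, Finset.sum_product]
  rfl

lemma sdiff_eq_empty_iff_eq {α : Type*} [DecidableEq α] {S T : Finset α} (h : S ⊆ T) :
    T \ S = ∅ ↔ S = T :=
  Finset.sdiff_eq_empty_iff_subset.trans ⟨h.antisymm, fun hST => hST.ge⟩

/-- The alternating sum `∑_{S ⊆ D} (-1)^{|S|} f(S)` of a set function over the subsets of `D`.
Möbius values and the numbers `χ̄_{M/F}(1)` are both of this form. -/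
def altSum {α R : Type*} [Ring R] (D : Finset α) (f : Finset α → R) : R :=
  ∑ S ∈ D.powerset, (-1) ^ S.card * f S

section AltSum

variable {α R : Type*} [Ring R] {D D' E F G : Finset α} {f g : Finset α → R}

lemma altSum_congr (h : ∀ S ⊆ D, f S = g S) : altSum D f = altSum D g :=
  Finset.sum_congr rfl fun S hS => by rw [h S (Finset.mem_powerset.1 hS)]

lemma altSum_add (D : Finset α) (f g : Finset α → R) :
    altSum D (fun S => f S + g S) = altSum D f + altSum D g := by
  simp only [altSum, mul_add, Finset.sum_add_distrib]

lemma altSum_sub (D : Finset α) (f g : Finset α → R) :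
    altSum D (fun S => f S - g S) = altSum D f - altSum D g := by
  simp only [altSum, mul_sub, Finset.sum_sub_distrib]

lemma altSum_mul_left (D : Finset α) (c : R) (f : Finset α → R) :
    altSum D (fun S => c * f S) = c * altSum D f := by
  simp only [altSum, Finset.mul_sum, ((Commute.neg_one_left c).pow_left _).left_comm]

lemma altSum_mul_right (D : Finset α) (f : Finset α → R) (c : R) :
    altSum D (fun S => f S * c) = altSum D f * c := by
  simp only [altSum, Finset.sum_mul, mul_assoc]

lemma altSum_sum {ι : Type*} (s : Finset ι) (D : Finset α) (f : ι → Finset α → R) :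
    altSum D (fun S => ∑ i ∈ s, f i S) = ∑ i ∈ s, altSum D (f i) := by
  simp only [altSum, Finset.mul_sum]
  exact Finset.sum_comm

lemma altSum_singleton (e : α) (f : Finset α → R) : altSum {e} f = f ∅ - f {e} := by
  classical
  rw [altSum, ← insert_empty_eq, Finset.sum_powerset_insert (Finset.notMem_empty e)]
  simp [sub_eq_add_neg]

lemma intCast_altSum (D : Finset α) (f : Finset α → ℤ) :
    ((altSum D f : ℤ) : R) = altSum D fun S => (f S : R) := by
  simp only [altSum]
  push_cast
  rfl

variable [DecidableEq α]

lemma altSum_const (D : Finset α) (c : R) : altSum D (fun _ => c) = if D = ∅ then c else 0 := by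
  have h := congrArg (Int.cast : ℤ → R) (Finset.sum_powerset_neg_one_pow_card (x := D))
  push_cast at h
  rw [altSum, ← Finset.sum_mul, h, ite_mul, one_mul, zero_mul]

lemma altSum_ite_union_subset (hG : G ⊆ E) :
    altSum (E \ F) (fun S => if S ∪ F ⊆ G then (1 : R) else 0) = if F = G then 1 else 0 := by
  by_cases hFG : F ⊆ G
  · have hfilter : (E \ F).powerset.filter (· ∪ F ⊆ G) = (G \ F).powerset := by
      ext S
      simp only [Finset.mem_filter, Finset.mem_powerset, Finset.union_subset_iff,
        Finset.subset_sdiff]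
      exact ⟨fun h => ⟨h.2.1, h.1.2⟩, fun h => ⟨⟨h.1.trans hG, h.2⟩, h.1, hFG⟩⟩
    simp only [altSum, mul_ite, mul_zero]
    rw [← Finset.sum_filter, hfilter, ← if_congr (sdiff_eq_empty_iff_eq hFG) rfl rfl]
    exact altSum_const (G \ F) 1
  · have hne : F ≠ G := fun h => hFG h.le
    simp only [Finset.union_subset_iff, hFG, and_false, if_false, if_neg hne, altSum_const,
      ite_self]

lemma altSum_union (h : Disjoint D D') (f : Finset α → R) :
    altSum (D ∪ D') f = altSum D fun S => altSum D' fun T => f (S ∪ T) := by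
  simp only [altSum, Finset.powerset_union, Finset.mul_sum]
  rw [sum_sups_of_disjoint h subset_rfl subset_rfl]
  refine Finset.sum_congr rfl fun S hS => Finset.sum_congr rfl fun T hT => ?_
  rw [Finset.card_union_of_disjoint
    (h.mono (Finset.mem_powerset.1 hS) (Finset.mem_powerset.1 hT)), pow_add, mul_assoc]

end AltSum

lemma eval_divByMonic_X_sub_C {R : Type*} [CommRing R] (p : R[X]) (a : R) :
    (p /ₘ (X - C a)).eval a = (derivative p).eval a := by
  rw [← divByMonic_add_X_sub_C_mul_derivative_divByMonic_eq_derivative p a]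
  simp

namespace FinMatroid

variable {α : Type*} [DecidableEq α] {M N : FinMatroid α} {A F G : Finset α}

/-! ### Flats and closure -/

lemma mem_flats : F ∈ M.flats ↔ M.IsFlat F := by
  simp only [flats, Finset.mem_filter, Finset.mem_powerset]
  exact ⟨fun h => h.2, fun h => ⟨h.1, h⟩⟩

lemma flats_subset_powerset (M : FinMatroid α) : M.flats ⊆ M.E.powerset :=
  Finset.filter_subset _ _

lemma ground_mem_flats (M : FinMatroid α) : M.E ∈ M.flats :=
  mem_flats.2 ⟨subset_rfl, fun _ h h' => absurd h h'⟩

lemma IsFlat.rk_lt_rk_ground (hF : M.IsFlat F) (hne : F ≠ M.E) : M.rk F < M.rk M.E := by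
  obtain ⟨x, hx, hxF⟩ := Finset.exists_of_ssubset (hF.1.ssubset_of_ne hne)
  exact (hF.2 x hx hxF).trans_le (M.rk_mono (Finset.insert_subset hx hF.1))

lemma subset_cl (hA : A ⊆ M.E) : A ⊆ M.cl A := fun x hx =>
  Finset.mem_filter.2 ⟨hA hx, by rw [Finset.insert_eq_of_mem hx]⟩

lemma rk_union_of_subset_cl {B : Finset α} (h : B ⊆ M.cl A) : M.rk (B ∪ A) = M.rk A := by
  induction B using Finset.induction_on with
  | empty => rw [Finset.empty_union]
  | insert x B _ ih =>
    have hB := ih ((Finset.subset_insert _ _).trans h)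
    have hx : M.rk (insert x A) = M.rk A :=
      (Finset.mem_filter.1 (h (Finset.mem_insert_self _ _))).2
    have hunion : B ∪ A ∪ insert x A = insert x B ∪ A := by
      ext y; simp only [Finset.mem_union, Finset.mem_insert]; tauto
    have hsubmod := hunion ▸ M.rk_submod (B ∪ A) (insert x A)
    have hinter : M.rk A ≤ M.rk ((B ∪ A) ∩ insert x A) :=
      M.rk_mono (Finset.subset_inter Finset.subset_union_right (Finset.subset_insert _ _))
    have hmono : M.rk A ≤ M.rk (insert x B ∪ A) := M.rk_mono Finset.subset_union_right
    omega

lemma rk_cl (hA : A ⊆ M.E) : M.rk (M.cl A) = M.rk A := by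
  rw [← Finset.union_eq_left.2 (subset_cl hA)]
  exact rk_union_of_subset_cl subset_rfl

lemma isFlat_cl (hA : A ⊆ M.E) : M.IsFlat (M.cl A) := by
  refine ⟨Finset.filter_subset _ _, fun x hx hxcl => ?_⟩
  have hne : M.rk A ≠ M.rk (insert x A) := fun h => hxcl (Finset.mem_filter.2 ⟨hx, h.symm⟩)
  calc M.rk (M.cl A) = M.rk A := rk_cl hA
    _ < M.rk (insert x A) := (M.rk_mono (Finset.subset_insert x A)).lt_of_ne hne
    _ ≤ M.rk (insert x (M.cl A)) := M.rk_mono (Finset.insert_subset_insert x (subset_cl hA))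

lemma IsFlat.cl_subset (hG : M.IsFlat G) (h : A ⊆ G) : M.cl A ⊆ G := by
  intro x hx
  obtain ⟨hxE, hrk⟩ := Finset.mem_filter.1 hx
  by_contra hxG
  have hlt := hG.2 x hxE hxG
  have hunion : G ∪ insert x A = insert x G := by
    rw [Finset.union_insert, Finset.union_eq_left.2 h]
  have hsubmod := hunion ▸ M.rk_submod G (insert x A)
  have hinter : M.rk A ≤ M.rk (G ∩ insert x A) :=
    M.rk_mono (Finset.subset_inter h (Finset.subset_insert _ _))
  omega

lemma cl_eq_ground_iff (hA : A ⊆ M.E) : M.cl A = M.E ↔ M.rk A = M.rk M.E := by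
  rw [← rk_cl hA]
  refine ⟨congrArg M.rk, fun h => ?_⟩
  by_contra hne
  exact ((isFlat_cl hA).rk_lt_rk_ground hne).ne h

/-! ### The Möbius function -/

section Mobius

variable {μ : FinMatroid α → Finset α → ℤ}

lemma IsFlatMobius.sum_flats_superset (hμ : IsFlatMobius μ) (hA : A ⊆ M.E) :
    (∑ G ∈ M.flats.filter (A ⊆ ·), μ M G) = if M.rk A = M.rk M.E then 1 else 0 := by
  have hcl : M.flats.filter (A ⊆ ·) = M.flats.filter (M.cl A ⊆ ·) :=
    Finset.filter_congr fun G hG =>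
      ⟨(mem_flats.1 hG).cl_subset, (subset_cl hA).trans⟩
  rw [hcl, hμ M (M.cl A) (isFlat_cl hA)]
  exact if_congr (cl_eq_ground_iff hA) rfl rfl

/-- Rota's crosscut formula. -/
lemma IsFlatMobius.eq_altSum (hμ : IsFlatMobius μ) (hF : F ∈ M.flats) :
    μ M F = altSum (M.E \ F) fun S => if M.rk (S ∪ F) = M.rk M.E then 1 else 0 := by
  have hFE := (mem_flats.1 hF).1
  symm
  calc altSum (M.E \ F) (fun S => if M.rk (S ∪ F) = M.rk M.E then 1 else 0)
      = altSum (M.E \ F) fun S => ∑ G ∈ M.flats, μ M G * if S ∪ F ⊆ G then 1 else 0 := by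
        refine altSum_congr fun S hS => ?_
        rw [← hμ.sum_flats_superset
          (Finset.union_subset (hS.trans Finset.sdiff_subset) hFE), Finset.sum_filter]
        simp only [mul_ite, mul_one, mul_zero]
    _ = ∑ G ∈ M.flats, μ M G * if F = G then 1 else 0 := by
        rw [altSum_sum]
        refine Finset.sum_congr rfl fun G hG => ?_
        rw [altSum_mul_left, altSum_ite_union_subset (mem_flats.1 hG).1]
    _ = μ M F := by
        simp only [mul_ite, mul_one, mul_zero, Finset.sum_ite_eq, if_pos hF]

end Mobius

/-! ### Values of the reduced characteristic polynomial -/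

lemma redCharContractOne_eq_altSum (hF : F ⊆ M.E) :
    M.redCharContractOne F = altSum (M.E \ F) fun S => (M.rk M.E : ℚ) - M.rk (S ∪ F) := by
  rw [redCharContractOne, reducedCharPoly, eval_divByMonic_X_sub_C, contractCharPoly,
    charPolyAux, derivative_sum, eval_finsetSum]
  refine Finset.sum_congr rfl fun S hS => ?_
  have hSE : M.rk (S ∪ F) ≤ M.rk M.E := M.rk_mono
    (Finset.union_subset ((Finset.mem_powerset.1 hS).trans Finset.sdiff_subset) hF)
  have hFS : M.rk F ≤ M.rk (S ∪ F) := M.rk_mono Finset.subset_union_right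
  have hexp : M.rk (M.E \ F ∪ F) - M.rk F - (M.rk (S ∪ F) - M.rk F)
      = M.rk M.E - M.rk (S ∪ F) := by
    rw [Finset.sdiff_union_of_subset hF]; omega
  have hsign : ((-1 : ℚ[X]) ^ S.card) = C ((-1 : ℚ) ^ S.card) := by simp
  rw [hexp, hsign, derivative_C_mul, derivative_X_pow]
  simp [Nat.cast_sub hSE]

lemma redCharContractOne_of_rk_eq (hF : F ⊆ M.E) (h : M.rk F = M.rk M.E) :
    M.redCharContractOne F = 0 := by
  rw [redCharContractOne_eq_altSum hF, ← ite_self (0 : ℚ), ← altSum_const (M.E \ F)]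
  refine altSum_congr fun S hS => ?_
  have hrk : M.rk (S ∪ F) = M.rk M.E :=
    (M.rk_mono (Finset.union_subset (hS.trans Finset.sdiff_subset) hF)).antisymm
      (h ▸ M.rk_mono Finset.subset_union_right)
  rw [hrk, sub_self]

/-! ### Topological zeta functions -/

/-- `M` and `N` are the same matroid: they have the same ground set and the same ranks of subsets
of it, whereas the values of `rk` on other sets carry no information. -/
def SameMatroid (M N : FinMatroid α) : Prop :=
  M.E = N.E ∧ ∀ S ⊆ M.E, M.rk S = N.rk S

lemma SameMatroid.restrict (h : SameMatroid M N) (hF : F ⊆ M.E) :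
    SameMatroid (M.restrict F) (N.restrict F) :=
  ⟨rfl, fun S hS => h.2 S (Finset.Subset.trans hS hF)⟩

lemma SameMatroid.flats_eq (h : SameMatroid M N) : M.flats = N.flats := by
  obtain ⟨hE, hrk⟩ := h
  ext F
  rw [mem_flats, mem_flats, IsFlat, IsFlat, ← hE]
  refine and_congr_right fun hF => forall₂_congr fun x hx => ?_
  rw [hrk F hF, hrk _ (Finset.insert_subset hx hF)]

lemma SameMatroid.redCharContractOne_eq (h : SameMatroid M N) (hF : F ⊆ M.E) :
    M.redCharContractOne F = N.redCharContractOne F := by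
  obtain ⟨hE, hrk⟩ := h
  rw [redCharContractOne_eq_altSum hF, redCharContractOne_eq_altSum (hE ▸ hF), ← hE]
  refine altSum_congr fun S hS => ?_
  rw [hrk _ subset_rfl, hrk _ (Finset.union_subset (hS.trans Finset.sdiff_subset) hF)]

/-- The factor `|E| s + rk M` by which the recurrence for `Z_M` divides. -/
noncomputable def zetaDenom (M : FinMatroid α) : RatFunc ℚ :=
  (M.E.card : RatFunc ℚ) * RatFunc.X + (M.rk M.E : RatFunc ℚ)

section Zeta

variable {Z : FinMatroid α → RatFunc ℚ}

lemma zetaDenom_ne_zero (h : M.E.Nonempty) : M.zetaDenom ≠ 0 := by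
  have hcast : M.zetaDenom =
      algebraMap ℚ[X] (RatFunc ℚ) (C (M.E.card : ℚ) * X + C (M.rk M.E : ℚ)) := by
    simp [zetaDenom]
  rw [hcast, Ne, map_eq_zero_iff _ (RatFunc.algebraMap_injective ℚ)]
  intro hzero
  have hcoeff := congrArg (coeff · 1) hzero
  simp [h.ne_empty] at hcoeff

lemma IsTopZeta.zetaDenom_mul (hZ : IsTopZeta Z) (M : FinMatroid α) :
    M.zetaDenom * Z M =
      ∑ F ∈ M.flats, RatFunc.C (M.redCharContractOne F) * Z (M.restrict F) := by
  have hproper : ∑ F ∈ M.properFlats, RatFunc.C (M.redCharContractOne F) * Z (M.restrict F)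
      = ∑ F ∈ M.flats, RatFunc.C (M.redCharContractOne F) * Z (M.restrict F) := by
    refine Finset.sum_filter_of_ne fun F hF hne hFE => hne ?_
    rw [redCharContractOne_of_rk_eq (mem_flats.1 hF).1 (hFE ▸ rfl), map_zero, zero_mul]
  rcases M.E.eq_empty_or_nonempty with hE | hE
  · have hnone : M.properFlats = ∅ := by
      refine Finset.filter_eq_empty_iff.2 fun F hF hne => hne ?_
      rw [hE, ← Finset.subset_empty, ← hE]
      exact (mem_flats.1 hF).1
    rw [← hproper, hnone, zetaDenom, hE, M.rk_empty]
    simp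
  · rw [hZ.2 M hE, hproper]
    exact mul_div_cancel₀ _ (zetaDenom_ne_zero hE)

lemma IsTopZeta.congr (hZ : IsTopZeta Z) (h : SameMatroid M N) : Z M = Z N := by
  induction hn : M.E.card using Nat.strong_induction_on generalizing M N with
  | _ n ih =>
    rcases M.E.eq_empty_or_nonempty with hE | hE
    · rw [hZ.1 M hE, hZ.1 N (h.1 ▸ hE)]
    · have hsum : ∑ F ∈ M.properFlats, RatFunc.C (M.redCharContractOne F) * Z (M.restrict F)
          = ∑ F ∈ N.properFlats, RatFunc.C (N.redCharContractOne F) * Z (N.restrict F) := by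
        rw [properFlats, properFlats, ← h.flats_eq, ← h.1]
        refine Finset.sum_congr rfl fun F hF => ?_
        obtain ⟨hF, hne⟩ := Finset.mem_filter.1 hF
        have hFE := (mem_flats.1 hF).1
        rw [h.redCharContractOne_eq hFE,
          ih F.card (hn ▸ Finset.card_lt_card (hFE.ssubset_of_ne hne)) (h.restrict hFE) rfl]
      rw [hZ.2 M hE, hZ.2 N (h.1 ▸ hE), hsum, ← h.1, h.2 _ subset_rfl]

end Zeta

/-! ### Direct sums -/

section DirectSum

variable {h : Disjoint M.E N.E}

lemma rk_directSum_union (hF : F ⊆ M.E) (hG : G ⊆ N.E) :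
    (M.directSum N h).rk (F ∪ G) = M.rk F + N.rk G := by
  change M.rk ((F ∪ G) ∩ M.E) + N.rk ((F ∪ G) ∩ N.E) = M.rk F + N.rk G
  have hFN : F ∩ N.E = ∅ := Finset.disjoint_iff_inter_eq_empty.1 (h.mono_left hF)
  have hGM : G ∩ M.E = ∅ := Finset.disjoint_iff_inter_eq_empty.1 (h.symm.mono_left hG)
  rw [Finset.union_inter_distrib_right, Finset.union_inter_distrib_right, hFN, hGM,
    Finset.inter_eq_left.2 hF, Finset.inter_eq_left.2 hG, Finset.union_empty, Finset.empty_union]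

lemma rk_directSum_ground : (M.directSum N h).rk (M.directSum N h).E = M.rk M.E + N.rk N.E :=
  rk_directSum_union subset_rfl subset_rfl

lemma isFlat_directSum_union (hF : F ⊆ M.E) (hG : G ⊆ N.E) :
    (M.directSum N h).IsFlat (F ∪ G) ↔ M.IsFlat F ∧ N.IsFlat G := by
  have hleft : ∀ x ∈ M.E, (x ∉ F ∪ G ↔ x ∉ F) ∧
      (M.directSum N h).rk (insert x (F ∪ G)) = M.rk (insert x F) + N.rk G := by
    intro x hx
    have hxG : x ∉ G := fun hxG => Finset.disjoint_left.1 h hx (hG hxG)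
    rw [← Finset.insert_union, rk_directSum_union (Finset.insert_subset hx hF) hG]
    simp [hxG]
  have hright : ∀ x ∈ N.E, (x ∉ F ∪ G ↔ x ∉ G) ∧
      (M.directSum N h).rk (insert x (F ∪ G)) = M.rk F + N.rk (insert x G) := by
    intro x hx
    have hxF : x ∉ F := fun hxF => Finset.disjoint_left.1 h (hF hxF) hx
    rw [← Finset.union_insert, rk_directSum_union hF (Finset.insert_subset hx hG)]
    simp [hxF]
  have hground : (M.directSum N h).E = M.E ∪ N.E := rfl
  simp only [IsFlat, hground, Finset.union_subset_union hF hG, hF, hG, true_and,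
    rk_directSum_union hF hG, Finset.forall_mem_union]
  refine and_congr (forall₂_congr fun x hx => ?_) (forall₂_congr fun x hx => ?_)
  · rw [(hleft x hx).1, (hleft x hx).2, add_lt_add_iff_right]
  · rw [(hright x hx).1, (hright x hx).2, add_lt_add_iff_left]

lemma flats_directSum : (M.directSum N h).flats = M.flats ⊻ N.flats := by
  ext H
  simp only [Finset.mem_sups, mem_flats, Finset.sup_eq_union]
  constructor
  · intro hH
    have hsplit : H ∩ M.E ∪ H ∩ N.E = H := by
      rw [← Finset.inter_union_distrib_left]
      exact Finset.inter_eq_left.2 hH.1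
    rw [← hsplit, isFlat_directSum_union Finset.inter_subset_right Finset.inter_subset_right] at hH
    exact ⟨_, hH.1, _, hH.2, hsplit⟩
  · rintro ⟨F, hF, G, hG, rfl⟩
    exact (isFlat_directSum_union hF.1 hG.1).2 ⟨hF, hG⟩

lemma sum_flats_directSum {R : Type*} [AddCommMonoid R] (f : Finset α → R) :
    ∑ H ∈ (M.directSum N h).flats, f H = ∑ F ∈ M.flats, ∑ G ∈ N.flats, f (F ∪ G) := by
  rw [flats_directSum]
  exact sum_sups_of_disjoint h M.flats_subset_powerset N.flats_subset_powerset f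

lemma restrict_directSum_union (hF : F ⊆ M.E) (hG : G ⊆ N.E) :
    SameMatroid ((M.directSum N h).restrict (F ∪ G))
      ((M.restrict F).directSum (N.restrict G) (h.mono hF hG)) := by
  refine ⟨rfl, fun S (hS : S ⊆ F ∪ G) => ?_⟩
  have hsplit : S ∩ F ∪ S ∩ G = S := by
    rw [← Finset.inter_union_distrib_left]
    exact Finset.inter_eq_left.2 hS
  calc (M.directSum N h).rk S = (M.directSum N h).rk (S ∩ F ∪ S ∩ G) := by rw [hsplit]
    _ = M.rk (S ∩ F) + N.rk (S ∩ G) := rk_directSum_union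
        (Finset.inter_subset_right.trans hF) (Finset.inter_subset_right.trans hG)

lemma altSum_directSum {R : Type*} [Ring R] (hF : F ⊆ M.E) (hG : G ⊆ N.E)
    (f : Finset α → R) :
    altSum ((M.directSum N h).E \ (F ∪ G)) (fun S => f (S ∪ (F ∪ G))) =
      altSum (M.E \ F) fun S => altSum (N.E \ G) fun T => f ((S ∪ F) ∪ (T ∪ G)) := by
  have hsdiff : (M.directSum N h).E \ (F ∪ G) = (M.E \ F) ∪ (N.E \ G) := by
    have hFN : Disjoint N.E F := h.symm.mono_right hF
    have hGM : Disjoint M.E G := h.mono_right hG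
    change (M.E ∪ N.E) \ (F ⊔ G) = _
    rw [Finset.union_sdiff_distrib, ← sdiff_sdiff_left, ← sdiff_sdiff_left,
      (hGM.mono_left Finset.sdiff_subset).sdiff_eq_left, hFN.sdiff_eq_left]
  rw [hsdiff, altSum_union (h.mono Finset.sdiff_subset Finset.sdiff_subset)]
  simp only [Finset.union_union_union_comm]

lemma redCharContractOne_directSum (hF : F ⊆ M.E) (hG : G ⊆ N.E) :
    (M.directSum N h).redCharContractOne (F ∪ G) =
      (if G = N.E then M.redCharContractOne F else 0) +
        if F = M.E then N.redCharContractOne G else 0 := by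
  have hcorank : ∀ S ⊆ M.E \ F, ∀ T ⊆ N.E \ G,
      (((M.directSum N h).rk (M.directSum N h).E : ℚ) -
        (M.directSum N h).rk ((S ∪ F) ∪ (T ∪ G))) =
      ((M.rk M.E : ℚ) - M.rk (S ∪ F)) + ((N.rk N.E : ℚ) - N.rk (T ∪ G)) := by
    intro S hS T hT
    rw [rk_directSum_ground,
      rk_directSum_union (Finset.union_subset (hS.trans Finset.sdiff_subset) hF)
        (Finset.union_subset (hT.trans Finset.sdiff_subset) hG)]
    push_cast
    ring
  rw [redCharContractOne_eq_altSum (Finset.union_subset_union hF hG),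
    altSum_directSum hF hG fun S =>
      ((M.directSum N h).rk (M.directSum N h).E : ℚ) - (M.directSum N h).rk S,
    altSum_congr fun S hS => altSum_congr (hcorank S hS)]
  simp only [altSum_add, altSum_const, sdiff_eq_empty_iff_eq hF, sdiff_eq_empty_iff_eq hG,
    ← redCharContractOne_eq_altSum hG]
  rw [redCharContractOne_eq_altSum hF]
  split_ifs <;> simp only [altSum_const, ite_self]

lemma IsFlatMobius.directSum_union {μ : FinMatroid α → Finset α → ℤ} (hμ : IsFlatMobius μ)
    (hF : F ∈ M.flats) (hG : G ∈ N.flats) :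
    μ (M.directSum N h) (F ∪ G) = μ M F * μ N G := by
  have hFE := (mem_flats.1 hF).1
  have hGE := (mem_flats.1 hG).1
  have hFG : F ∪ G ∈ (M.directSum N h).flats := by
    rw [flats_directSum]
    exact Finset.sup_mem_sups hF hG
  rw [hμ.eq_altSum hFG, hμ.eq_altSum hF, hμ.eq_altSum hG,
    altSum_directSum hFE hGE fun S =>
      if (M.directSum N h).rk S = (M.directSum N h).rk (M.directSum N h).E then 1 else 0,
    ← altSum_mul_right]
  refine altSum_congr fun S hS => ?_
  rw [← altSum_mul_left]
  refine altSum_congr fun T hT => ?_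
  have hSF := Finset.union_subset (hS.trans Finset.sdiff_subset) hFE
  have hTG := Finset.union_subset (hT.trans Finset.sdiff_subset) hGE
  have hM := M.rk_mono hSF
  have hN := N.rk_mono hTG
  have hspan : M.rk (S ∪ F) + N.rk (T ∪ G) = M.rk M.E + N.rk N.E ↔
      M.rk (S ∪ F) = M.rk M.E ∧ N.rk (T ∪ G) = N.rk N.E := by omega
  rw [rk_directSum_ground, rk_directSum_union hSF hTG, ite_zero_mul_ite_zero, one_mul]
  exact if_congr hspan rfl rfl

variable {Z Y : FinMatroid α → RatFunc ℚ}

lemma zetaDenom_directSum : (M.directSum N h).zetaDenom = M.zetaDenom + N.zetaDenom := by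
  have hcard : (M.directSum N h).E.card = M.E.card + N.E.card := Finset.card_union_of_disjoint h
  rw [zetaDenom, hcard, rk_directSum_ground, zetaDenom, zetaDenom]
  push_cast
  ring

lemma sum_flats_redCharContractOne_directSum (z w : Finset α → RatFunc ℚ) :
    ∑ F ∈ M.flats, ∑ G ∈ N.flats,
        RatFunc.C ((M.directSum N h).redCharContractOne (F ∪ G)) * (z F * w G) =
      (∑ F ∈ M.flats, RatFunc.C (M.redCharContractOne F) * z F) * w N.E +
        z M.E * ∑ G ∈ N.flats, RatFunc.C (N.redCharContractOne G) * w G := by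
  have hterm : ∀ F ∈ M.flats, ∀ G ∈ N.flats,
      RatFunc.C ((M.directSum N h).redCharContractOne (F ∪ G)) * (z F * w G) =
        (if G = N.E then RatFunc.C (M.redCharContractOne F) * z F * w G else 0) +
          if F = M.E then z F * (RatFunc.C (N.redCharContractOne G) * w G) else 0 := by
    intro F hF G hG
    rw [redCharContractOne_directSum (mem_flats.1 hF).1 (mem_flats.1 hG).1, map_add]
    simp only [apply_ite RatFunc.C, map_zero]
    split_ifs <;> ring
  rw [Finset.sum_congr rfl fun F hF => Finset.sum_congr rfl (hterm F hF)]
  simp only [Finset.sum_add_distrib, Finset.sum_ite_eq', N.ground_mem_flats, if_true]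
  rw [Finset.sum_comm (s := M.flats)]
  simp only [Finset.sum_ite_eq', M.ground_mem_flats, if_true, Finset.sum_mul, Finset.mul_sum]

theorem IsTopZeta.directSum (hZ : IsTopZeta Z) : Z (M.directSum N h) = Z M * Z N := by
  induction hn : M.E.card + N.E.card using Nat.strong_induction_on generalizing M N with
  | _ n ih =>
    rcases (M.directSum N h).E.eq_empty_or_nonempty with hE | hE
    · obtain ⟨hM, hN⟩ := Finset.union_eq_empty.1 hE
      rw [hZ.1 _ hE, hZ.1 M hM, hZ.1 N hN, one_mul]
    have hterm : ∀ F ∈ M.flats, ∀ G ∈ N.flats,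
        RatFunc.C ((M.directSum N h).redCharContractOne (F ∪ G)) *
            Z ((M.directSum N h).restrict (F ∪ G)) =
          RatFunc.C ((M.directSum N h).redCharContractOne (F ∪ G)) *
            (Z (M.restrict F) * Z (N.restrict G)) := by
      intro F hF G hG
      have hFM := (mem_flats.1 hF).1
      have hGN := (mem_flats.1 hG).1
      by_cases hground : F = M.E ∧ G = N.E
      · obtain ⟨rfl, rfl⟩ := hground
        have hzero : (M.directSum N h).redCharContractOne (M.E ∪ N.E) = 0 :=
          redCharContractOne_of_rk_eq (Finset.Subset.refl _) rfl
        rw [hzero, map_zero, zero_mul, zero_mul]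
      · have hFcard := Finset.card_le_card hFM
        have hGcard := Finset.card_le_card hGN
        have hlt : F.card + G.card < n := by
          by_contra hge
          exact hground ⟨Finset.eq_of_subset_of_card_le hFM (by omega),
            Finset.eq_of_subset_of_card_le hGN (by omega)⟩
        rw [hZ.congr (restrict_directSum_union hFM hGN), ih _ hlt rfl]
    refine mul_left_cancel₀ (zetaDenom_ne_zero hE) ?_
    calc (M.directSum N h).zetaDenom * Z (M.directSum N h)
        = ∑ F ∈ M.flats, ∑ G ∈ N.flats,
            RatFunc.C ((M.directSum N h).redCharContractOne (F ∪ G)) *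
              (Z (M.restrict F) * Z (N.restrict G)) := by
          rw [hZ.zetaDenom_mul, sum_flats_directSum]
          exact Finset.sum_congr rfl fun F hF => Finset.sum_congr rfl (hterm F hF)
      _ = M.zetaDenom * Z M * Z N + Z M * (N.zetaDenom * Z N) := by
          rw [sum_flats_redCharContractOne_directSum (fun F => Z (M.restrict F))
            (fun G => Z (N.restrict G)), ← hZ.zetaDenom_mul, ← hZ.zetaDenom_mul]
          rfl
      _ = (M.directSum N h).zetaDenom * (Z M * Z N) := by
          rw [zetaDenom_directSum]
          ring

theorem IsMobiusInv.directSum {μ : FinMatroid α → Finset α → ℤ} (hY : IsMobiusInv μ Z Y)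
    (hZ : IsTopZeta Z) (hμ : IsFlatMobius μ) : Y (M.directSum N h) = Y M * Y N := by
  rw [hY, hY M, hY N, sum_flats_directSum, Finset.sum_mul_sum]
  refine Finset.sum_congr rfl fun F hF => Finset.sum_congr rfl fun G hG => ?_
  rw [hμ.directSum_union hF hG,
    hZ.congr (restrict_directSum_union (mem_flats.1 hF).1 (mem_flats.1 hG).1), hZ.directSum]
  push_cast
  ring

end DirectSum

/-! ### Truncation -/

section Truncation

variable {Z Y : FinMatroid α → RatFunc ℚ} {μ : FinMatroid α → Finset α → ℤ}

lemma isFlat_truncation_iff (hF : M.rk F + 1 < M.rk M.E) :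
    M.truncation.IsFlat F ↔ M.IsFlat F := by
  refine and_congr_right fun _ => forall₂_congr fun x _ => imp_congr_right fun _ => ?_
  change min (M.rk F) (M.rk M.E - 1) < min (M.rk (insert x F)) (M.rk M.E - 1) ↔ _
  omega

lemma restrict_truncation (hF : M.rk F < M.rk M.E) :
    SameMatroid (M.truncation.restrict F) (M.restrict F) := by
  refine ⟨rfl, fun S (hS : S ⊆ F) => ?_⟩
  have hSF : M.rk S ≤ M.rk F := M.rk_mono hS
  exact min_eq_left (by omega : M.rk S ≤ M.rk M.E - 1)

lemma IsFlatMobius.redCharContractOne_truncation (hμ : IsFlatMobius μ) (hF : F ∈ M.flats) :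
    M.truncation.redCharContractOne F =
      M.redCharContractOne F - (if F = M.E then 1 else 0) + (μ M F : ℚ) := by
  have hFE := (mem_flats.1 hF).1
  have hcorank : ∀ S ⊆ M.E \ F,
      ((M.truncation.rk M.truncation.E : ℚ) - M.truncation.rk (S ∪ F)) =
        ((M.rk M.E : ℚ) - M.rk (S ∪ F)) - 1 +
          if M.rk (S ∪ F) = M.rk M.E then 1 else 0 := by
    intro S hS
    have hle := M.rk_mono (Finset.union_subset (hS.trans Finset.sdiff_subset) hFE)
    change ((min (M.rk M.E) (M.rk M.E - 1) : ℕ) : ℚ) -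
      (min (M.rk (S ∪ F)) (M.rk M.E - 1) : ℕ) = _
    split_ifs with hspan
    · rw [hspan]; ring
    · rw [min_eq_right (Nat.sub_le _ _), min_eq_left (by omega), Nat.cast_sub (by omega)]
      push_cast; ring
  calc M.truncation.redCharContractOne F
      = altSum (M.E \ F) fun S => ((M.rk M.E : ℚ) - M.rk (S ∪ F)) - 1 +
          if M.rk (S ∪ F) = M.rk M.E then 1 else 0 :=
        (redCharContractOne_eq_altSum (M := M.truncation) hFE).trans (altSum_congr hcorank)
    _ = M.redCharContractOne F - (if F = M.E then 1 else 0) + (μ M F : ℚ) := by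
        rw [altSum_add, altSum_sub, altSum_const, ← redCharContractOne_eq_altSum hFE,
          if_congr (sdiff_eq_empty_iff_eq hFE) rfl rfl, hμ.eq_altSum hF, intCast_altSum]
        push_cast
        rfl

lemma rk_truncation_ground (M : FinMatroid α) : M.truncation.rk M.E = M.rk M.E - 1 :=
  min_eq_right (Nat.sub_le _ _)

lemma redCharContractOne_truncation_of_le (hF : F ⊆ M.E) (h : M.rk M.E ≤ M.rk F + 1) :
    M.truncation.redCharContractOne F = 0 := by
  refine redCharContractOne_of_rk_eq hF ?_
  exact (min_eq_right (by omega : M.rk M.E - 1 ≤ M.rk F)).trans M.rk_truncation_ground.symm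

lemma zetaDenom_truncation (hM : 0 < M.rk M.E) :
    M.truncation.zetaDenom = M.zetaDenom - 1 := by
  change (M.E.card : RatFunc ℚ) * RatFunc.X + (M.truncation.rk M.E : RatFunc ℚ) = _
  rw [rk_truncation_ground, zetaDenom, Nat.cast_pred hM, add_sub_assoc]

lemma IsTopZeta.sum_flats_truncation (hZ : IsTopZeta Z) :
    ∑ F ∈ M.truncation.flats,
        RatFunc.C (M.truncation.redCharContractOne F) * Z (M.truncation.restrict F) =
      ∑ F ∈ M.flats, RatFunc.C (M.truncation.redCharContractOne F) * Z (M.restrict F) := by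
  have hlt : ∀ F ⊆ M.E, ∀ z : RatFunc ℚ,
      RatFunc.C (M.truncation.redCharContractOne F) * z ≠ 0 → M.rk F + 1 < M.rk M.E := by
    intro F hF z hne
    by_contra hle
    exact hne (by
      rw [redCharContractOne_truncation_of_le hF (not_lt.1 hle), map_zero, zero_mul])
  have hflats : M.truncation.flats.filter (fun F => M.rk F + 1 < M.rk M.E) =
      M.flats.filter (fun F => M.rk F + 1 < M.rk M.E) := by
    ext F
    simp only [Finset.mem_filter, mem_flats]
    exact and_congr_left fun hF => isFlat_truncation_iff hF
  rw [← Finset.sum_filter_of_ne (s := M.truncation.flats)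
      fun F hF => hlt F (mem_flats.1 hF).1 _, hflats,
    ← Finset.sum_filter_of_ne (s := M.flats) fun F hF => hlt F (mem_flats.1 hF).1 _]
  refine Finset.sum_congr rfl fun F hF => ?_
  rw [hZ.congr (restrict_truncation ((Nat.lt_succ_self _).trans (Finset.mem_filter.1 hF).2))]

theorem IsTopZeta.truncation (hZ : IsTopZeta Z) (hμ : IsFlatMobius μ)
    (hY : IsMobiusInv μ Z Y) (hM : 0 < M.rk M.E) :
    Z M.truncation = Z M + Y M / M.truncation.zetaDenom := by
  have hE : M.truncation.E.Nonempty := Finset.card_pos.1 (hM.trans_le (M.rk_le_card M.E))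
  have hsum : M.truncation.zetaDenom * Z M.truncation = M.truncation.zetaDenom * Z M + Y M :=
    calc M.truncation.zetaDenom * Z M.truncation
        = ∑ F ∈ M.flats, (RatFunc.C (M.redCharContractOne F) * Z (M.restrict F) -
            (if F = M.E then Z (M.restrict F) else 0) +
              (μ M F : RatFunc ℚ) * Z (M.restrict F)) := by
          rw [hZ.zetaDenom_mul, hZ.sum_flats_truncation]
          refine Finset.sum_congr rfl fun F hF => ?_
          rw [hμ.redCharContractOne_truncation hF, map_add, map_sub, map_intCast,
            apply_ite RatFunc.C, map_one, map_zero]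
          split_ifs <;> ring
      _ = M.zetaDenom * Z M - Z M + Y M := by
          rw [Finset.sum_add_distrib, Finset.sum_sub_distrib, ← hZ.zetaDenom_mul, ← hY M,
            Finset.sum_ite_eq', if_pos M.ground_mem_flats]
          rfl
      _ = M.truncation.zetaDenom * Z M + Y M := by
          rw [zetaDenom_truncation hM]
          ring
  have hne := zetaDenom_ne_zero hE
  field_simp
  linear_combination hsum

end Truncation

/-! ### The matroid `U_{1,1}` -/

section FreeSingleton

variable {Z Y : FinMatroid α → RatFunc ℚ} {μ : FinMatroid α → Finset α → ℤ}

lemma flats_freeM (E : Finset α) : (freeM E).flats = E.powerset := by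
  refine Finset.filter_true_of_mem fun F hF => ⟨Finset.mem_powerset.1 hF, fun x hx hxF => ?_⟩
  have hFE : F ⊆ E := Finset.mem_powerset.1 hF
  have hinsert : insert x F ⊆ E := Finset.insert_subset hx hFE
  change (F ∩ E).card < (insert x F ∩ E).card
  rw [Finset.inter_eq_left.2 hFE, Finset.inter_eq_left.2 hinsert]
  exact Finset.card_lt_card (Finset.ssubset_insert hxF)

lemma sum_flats_freeM_singleton {R : Type*} [AddCommMonoid R] (e : α) (f : Finset α → R) :
    ∑ F ∈ (freeM {e}).flats, f F = f ∅ + f {e} := by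
  rw [flats_freeM, ← insert_empty_eq, Finset.sum_powerset_insert (Finset.notMem_empty e)]
  simp only [Finset.powerset_empty, Finset.sum_singleton]

lemma zetaDenom_freeM_singleton (e : α) : (freeM {e}).zetaDenom = RatFunc.X + 1 := by
  simp [zetaDenom, freeM]

lemma redCharContractOne_freeM_singleton (e : α) :
    (freeM {e}).redCharContractOne ∅ = 1 := by
  rw [redCharContractOne_eq_altSum (Finset.empty_subset _), Finset.sdiff_empty]
  change altSum {e} _ = _
  rw [altSum_singleton]
  simp [freeM]

lemma IsTopZeta.freeM_singleton (hZ : IsTopZeta Z) (e : α) :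
    Z (freeM {e}) = 1 / (RatFunc.X + 1) := by
  have hX : (RatFunc.X + 1 : RatFunc ℚ) ≠ 0 :=
    zetaDenom_freeM_singleton e ▸ zetaDenom_ne_zero (Finset.singleton_nonempty e)
  have hground : (freeM {e}).redCharContractOne {e} = 0 :=
    redCharContractOne_of_rk_eq (Finset.Subset.refl _) rfl
  rw [eq_div_iff hX, mul_comm, ← zetaDenom_freeM_singleton e, hZ.zetaDenom_mul,
    sum_flats_freeM_singleton, hground, redCharContractOne_freeM_singleton,
    hZ.1 ((freeM {e}).restrict ∅) rfl, map_zero, map_one, zero_mul, one_mul, add_zero]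

lemma IsFlatMobius.freeM_singleton_empty (hμ : IsFlatMobius μ) (e : α) :
    μ (freeM {e}) ∅ = -1 := by
  have hflat : ∅ ∈ (freeM {e}).flats := by
    rw [flats_freeM]
    exact Finset.empty_mem_powerset _
  rw [hμ.eq_altSum hflat, Finset.sdiff_empty]
  change altSum {e} _ = _
  rw [altSum_singleton]
  simp [freeM]

lemma IsFlatMobius.apply_ground (hμ : IsFlatMobius μ) (M : FinMatroid α) : μ M M.E = 1 := by
  rw [hμ.eq_altSum M.ground_mem_flats, sdiff_self]
  simp [altSum]

lemma IsMobiusInv.freeM_singleton (hY : IsMobiusInv μ Z Y) (hZ : IsTopZeta Z)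
    (hμ : IsFlatMobius μ) (e : α) : Y (freeM {e}) = 1 / (RatFunc.X + 1) - 1 := by
  have hground : μ (freeM {e}) {e} = 1 := hμ.apply_ground (freeM {e})
  have hZground : Z ((freeM {e}).restrict {e}) = 1 / (RatFunc.X + 1) := hZ.freeM_singleton e
  rw [hY, sum_flats_freeM_singleton, hμ.freeM_singleton_empty, hground,
    hZ.1 ((freeM {e}).restrict ∅) rfl, hZground]
  push_cast
  ring

end FreeSingleton

end FinMatroid

open FinMatroid in
theorem topZeta_freeExtension_general {α : Type*} [DecidableEq α]
    (Z Y : FinMatroid α → RatFunc ℚ) (μ : FinMatroid α → Finset α → ℤ)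
    (hZ : IsTopZeta Z) (hμ : IsFlatMobius μ) (hY : IsMobiusInv μ Z Y)
    (M : FinMatroid α) (e : α) (he : e ∉ M.E) :
    Z (M.freeExtension e he) = (1 / (RatFunc.X + 1)) *
      (Z M - RatFunc.X /
          (((M.E.card + 1 : ℕ) : RatFunc ℚ) * RatFunc.X + (M.rk M.E : RatFunc ℚ)) * Y M) := by
  have h : Disjoint M.E (freeM {e}).E := Finset.disjoint_singleton_right.2 he
  have hpos : 0 < (M.directSum (freeM {e}) h).rk (M.directSum (freeM {e}) h).E := by
    rw [rk_directSum_ground]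
    simp [freeM]
  have hdenom : (M.directSum (freeM {e}) h).truncation.zetaDenom =
      ((M.E.card + 1 : ℕ) : RatFunc ℚ) * RatFunc.X + (M.rk M.E : RatFunc ℚ) := by
    rw [zetaDenom_truncation hpos, zetaDenom_directSum, zetaDenom_freeM_singleton, zetaDenom]
    push_cast
    ring
  have hX : (RatFunc.X + 1 : RatFunc ℚ) ≠ 0 :=
    zetaDenom_freeM_singleton e ▸ zetaDenom_ne_zero (Finset.singleton_nonempty e)
  calc Z (M.freeExtension e he)
      = Z (M.directSum (freeM {e}) h) + Y (M.directSum (freeM {e}) h) /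
          (M.directSum (freeM {e}) h).truncation.zetaDenom :=
        hZ.truncation hμ hY hpos
    _ = Z M * (1 / (RatFunc.X + 1)) + Y M * (1 / (RatFunc.X + 1) - 1) /
          (((M.E.card + 1 : ℕ) : RatFunc ℚ) * RatFunc.X + (M.rk M.E : RatFunc ℚ)) := by
        rw [hdenom, hZ.directSum, hY.directSum hZ hμ, hZ.freeM_singleton,
          hY.freeM_singleton hZ hμ]
    _ = _ := by
        rw [div_sub_one hX]
        ring

open FinMatroid in
/-- `Z_{M+e}(s) = (1/(s+1)) (Z_M(s) - s/((|E|+1)s + rk M) ⬝ Y_M(s))`. -/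
theorem topZeta_freeExtension {α : Type*} [DecidableEq α]
    (Z Y : FinMatroid α → RatFunc ℚ) (μ : FinMatroid α → Finset α → ℤ)
    (hZ : IsTopZeta Z) (hμ : IsFlatMobius μ) (hY : IsMobiusInv μ Z Y)
    (M : FinMatroid α) (hL : M.Loopless) (e : α) (he : e ∉ M.E) :
    Z (M.freeExtension e he) = (1 / (RatFunc.X + 1)) *
      (Z M - RatFunc.X /
          (((M.E.card + 1 : ℕ) : RatFunc ℚ) * RatFunc.X + (M.rk M.E : RatFunc ℚ)) * Y M) :=
  topZeta_freeExtension_general Z Y μ hZ hμ hY M e he
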